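/- Let (G,c,o) be a recurrent rooted network, h a potential, and {Y_n} the h-process started at a vertex v ∈ S_h={u : h(u)>0}. Then for every M > 0, P^h_v(h(Y_ℓ) > M) → 1 as ℓ → ∞. -/

import Mathlib

open scoped ENNReal
open Filter Topology Classical
noncomputable section

/-- A rooted network: a connected, locally finite simple graph with positive
symmetric edge conductances (extended by `0` to non-edges) and a root `o`. -/
structure RootedNetwork (V : Type*) where
  G : SimpleGraph V
  locallyFinite : ∀ x : V, (G.neighborSet x).Finite
  connected : G.Connected
  c : V → V → ℝ
  c_symm : ∀ x y, c x y = c y x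
  c_pos : ∀ x y, G.Adj x y → 0 < c x y
  c_eq_zero : ∀ x y, ¬ G.Adj x y → c x y = 0
  o : V

namespace RootedNetwork

variable {V : Type*}

/-- The vertex weight `c_x = Σ_{z ∼ x} c_{xz}`. -/
noncomputable def cv (N : RootedNetwork V) (x : V) : ℝ := ∑' y, N.c x y

/-- The transition probability `p(x,y) = c_{xy} / c_x` of the network random walk. -/
noncomputable def p (N : RootedNetwork V) (x y : V) : ℝ≥0∞ :=
  ENNReal.ofReal (N.c x y / N.cv x)

/-- The probability that the network random walk started at `x` begins with the
given finite sequence of steps. -/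
noncomputable def pathProb (N : RootedNetwork V) : V → List V → ℝ≥0∞
  | _, [] => 1
  | x, y :: l => N.p x y * pathProb N y l

/-- The probability, starting from `x`, that the walk ever visits `b`
(`P_x(τ_b < ∞)`), computed by decomposing over the finite path up to the first
visit of `b`. -/
noncomputable def hitProb (N : RootedNetwork V) (x b : V) : ℝ≥0∞ :=
  if x = b then 1
  else ∑' l : {l : List V // l.getLast? = some b ∧ b ∉ l.dropLast}, N.pathProb x l.1

/-- A rooted network is recurrent if the walk started from any vertex almost
surely visits the root `o`. -/
def Recurrent (N : RootedNetwork V) : Prop := ∀ x : V, N.hitProb x N.o = 1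

/-- The Green kernel `G_o(x,y) = Σ_{n ≥ 0} P_x(X_n = y, τ_o > n)` of the walk
killed at the root, computed as a sum over finite paths from `x` to `y`
avoiding `o` (the `n = 0` term is the first summand). -/
noncomputable def GreenKer (N : RootedNetwork V) (x y : V) : ℝ≥0∞ :=
  (if x = y ∧ x ≠ N.o then 1 else 0) +
    ∑' l : {l : List V // l.getLast? = some y ∧ N.o ∉ x :: l}, N.pathProb x l.1

/-- The Green density `g_o(x,y) = G_o(x,y) / c_y`. -/
noncomputable def greenDensity (N : RootedNetwork V) (x y : V) : ℝ≥0∞ :=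
  N.GreenKer x y / ENNReal.ofReal (N.cv y)

/-- The network Laplacian `Δ f (v) = Σ_{x ∼ v} c_{vx} (f(x) - f(v))`. -/
noncomputable def lap (N : RootedNetwork V) (f : V → ℝ) (v : V) : ℝ :=
  ∑' x, N.c v x * (f x - f v)

/-- A potential: a nonnegative function vanishing at `o`, with Laplacian `1`
at `o`, harmonic everywhere else. -/
def IsPotential (N : RootedNetwork V) (h : V → ℝ) : Prop :=
  (∀ v, 0 ≤ h v) ∧ h N.o = 0 ∧ N.lap h N.o = 1 ∧ ∀ v, v ≠ N.o → N.lap h v = 0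

end RootedNetwork
namespace RootedNetwork

variable {V : Type*}

/-- The transition probability `p^h(x,y) = p(x,y) h(y) / h(x)` of the Doob
`h`-process. -/
noncomputable def hp (N : RootedNetwork V) (h : V → ℝ) (x y : V) : ℝ≥0∞ :=
  N.p x y * ENNReal.ofReal (h y / h x)

/-- The probability that the `h`-process started at `x` begins with the given
finite sequence of steps. -/
noncomputable def hPathProb (N : RootedNetwork V) (h : V → ℝ) : V → List V → ℝ≥0∞
  | _, [] => 1
  | x, y :: l => N.hp h x y * hPathProb N h y l

end RootedNetwork
namespace RootedNetwork

/-- `P^h_v(h(Y_ℓ) > M)`: the probability that the `h`-process started at `v`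
satisfies `h(Y_ℓ) > M`, as a sum over length-`ℓ` paths. -/
noncomputable def hLevelProb {V : Type*} (N : RootedNetwork V) (h : V → ℝ)
    (v : V) (ℓ : ℕ) (M : ℝ) : ℝ≥0∞ :=
  ∑' l : {l : List V // l.length = ℓ ∧ M < h ((v :: l).getLast (List.cons_ne_nil v l))},
    N.hPathProb h v l.1

end RootedNetwork
namespace RootedNetwork

theorem tsum_list {V : Type*} (f : List V → ℝ≥0∞) :
    ∑' l, f l = f [] + ∑' y, ∑' l, f (y :: l) := by
  let e : Unit ⊕ (V × List V) ≃ List V :=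
    { toFun := fun x => match x with
        | Sum.inl _ => []
        | Sum.inr (y, l) => y :: l
      invFun := fun l => match l with
        | [] => Sum.inl ()
        | y :: l => Sum.inr (y, l)
      left_inv := by rintro (_ | ⟨y, l⟩) <;> rfl
      right_inv := by rintro (_ | ⟨y, l⟩) <;> rfl }
  rw [← e.tsum_eq f, Summable.tsum_sum ENNReal.summable ENNReal.summable, ENNReal.tsum_prod',
    tsum_fintype]
  simp [e]

variable {V : Type*} (N : RootedNetwork V)

def sv : ℕ → V → ℝ≥0∞
  | 0, x => if x = N.o then 0 else 1
  | n + 1, x => if x = N.o then 0 else ∑' y, N.p x y * sv n y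

def tv : ℕ → V → ℝ≥0∞
  | 0, x => if x = N.o then 1 else 0
  | n + 1, x => if x = N.o then 1 else ∑' y, N.p x y * tv n y

def av (h : V → ℝ) (M : ℝ) : ℕ → V → ℝ≥0∞
  | 0, x => if M < h x then 1 else 0
  | n + 1, x => ∑' y, N.hp h x y * av h M n y

def bv (h : V → ℝ) (M : ℝ) : ℕ → V → ℝ≥0∞
  | 0, x => if M < h x then 0 else 1
  | n + 1, x => ∑' y, N.hp h x y * bv h M n y

theorem c_nonneg (x y : V) : 0 ≤ N.c x y := by
  by_cases hxy : N.G.Adj x y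
  · exact (N.c_pos x y hxy).le
  · exact (N.c_eq_zero x y hxy).ge

theorem c_summable (x : V) (f : V → ℝ) : Summable (fun y => N.c x y * f y) := by
  apply summable_of_hasFiniteSupport
  refine (N.locallyFinite x).subset ?_
  intro y hy
  by_contra hn
  apply hy
  have : N.c x y = 0 := N.c_eq_zero x y hn
  simp [this]

theorem c_summable1 (x : V) : Summable (fun y => N.c x y) := by
  simpa using N.c_summable x (fun _ => 1)

theorem cv_pos (x : V) (hx : x ≠ N.o) : 0 < N.cv x := by
  haveI : Nontrivial V := ⟨x, N.o, hx⟩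
  obtain ⟨y, hy⟩ := N.connected.preconnected.exists_adj_of_nontrivial x
  exact (N.c_summable1 x).tsum_pos (N.c_nonneg x) y (N.c_pos x y hy)

theorem p_sum (x : V) (hx : x ≠ N.o) : ∑' y, N.p x y = 1 := by
  have hc := N.cv_pos x hx
  unfold p
  rw [← ENNReal.ofReal_tsum_of_nonneg
    (fun y => div_nonneg (N.c_nonneg x y) hc.le) ((N.c_summable1 x).div_const _),
    tsum_div_const]
  change ENNReal.ofReal (N.cv x / N.cv x) = 1
  rw [div_self hc.ne']
  simp

theorem hp_sum (h : V → ℝ) (hpot : N.IsPotential h) (x : V) (hx : 0 < h x) :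
    ∑' y, N.hp h x y = 1 := by
  obtain ⟨h0, ho, -, hh⟩ := hpot
  have hxo : x ≠ N.o := by rintro rfl; simp [ho] at hx
  have hc := N.cv_pos x hxo
  have hl := hh x hxo
  unfold lap at hl
  have e1 : ∑' y, N.c x y * h y = N.cv x * h x := by
    simp only [mul_sub] at hl
    rw [(N.c_summable x h).tsum_sub (N.c_summable x fun _ => h x), tsum_mul_right] at hl
    unfold cv
    linarith
  have e2 : ∀ y, N.hp h x y = ENNReal.ofReal (N.c x y * h y / (N.cv x * h x)) := by
    intro y
    unfold hp p
    rw [← ENNReal.ofReal_mul (div_nonneg (N.c_nonneg x y) hc.le), div_mul_div_comm]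
  simp only [e2]
  rw [← ENNReal.ofReal_tsum_of_nonneg
    (fun y => div_nonneg (mul_nonneg (N.c_nonneg x y) (h0 y)) (mul_pos hc hx).le)
      ((N.c_summable x h).div_const _), tsum_div_const, e1, div_self (mul_pos hc hx).ne']
  simp

theorem hp_zero (h : V → ℝ) (x y : V) (hy : h y = 0) : N.hp h x y = 0 := by
  simp [hp, hy]

theorem sv_add_tv (n : ℕ) (x : V) : N.sv n x + N.tv n x = 1 := by
  induction n generalizing x with
  | zero => unfold sv tv; split_ifs <;> simp
  | succ n ih =>
    unfold sv tv
    split_ifs with hx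
    · simp
    · rw [← ENNReal.tsum_add]
      simp only [← mul_add, ih, mul_one]
      exact N.p_sum x hx

theorem av_add_bv (h : V → ℝ) (hpot : N.IsPotential h) (M : ℝ) (n : ℕ) (x : V)
    (hx : 0 < h x) : N.av h M n x + N.bv h M n x = 1 := by
  induction n generalizing x with
  | zero => unfold av bv; split_ifs <;> simp
  | succ n ih =>
    unfold av bv
    rw [← ENNReal.tsum_add, ← N.hp_sum h hpot x hx]
    refine tsum_congr fun y => ?_
    rcases (hpot.1 y).eq_or_lt with hy | hy
    · simp [N.hp_zero h x y hy.symm]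
    · rw [← mul_add, ih y hy, mul_one]

theorem bv_le (h : V → ℝ) (hpot : N.IsPotential h) (M : ℝ) (n : ℕ) (x : V)
    (hx : 0 < h x) :
    ENNReal.ofReal (h x) * N.bv h M n x ≤ ENNReal.ofReal M * N.sv n x := by
  induction n generalizing x with
  | zero =>
    have hxo : x ≠ N.o := by rintro rfl; simp [hpot.2.1] at hx
    unfold bv sv
    split_ifs with h1
    · simp
    · simpa using ENNReal.ofReal_le_ofReal (not_lt.1 h1)
  | succ n ih =>
    have hxo : x ≠ N.o := by rintro rfl; simp [hpot.2.1] at hx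
    unfold bv sv
    rw [if_neg hxo, ← ENNReal.tsum_mul_left, ← ENNReal.tsum_mul_left]
    refine ENNReal.tsum_le_tsum fun y => ?_
    rcases (hpot.1 y).eq_or_lt with hy | hy
    · simp [N.hp_zero h x y hy.symm]
    · have e : ENNReal.ofReal (h x) * ENNReal.ofReal (h y / h x) = ENNReal.ofReal (h y) := by
        rw [← ENNReal.ofReal_mul hx.le, mul_div_cancel₀ _ hx.ne']
      calc ENNReal.ofReal (h x) * (N.hp h x y * N.bv h M n y)
          = N.p x y * ((ENNReal.ofReal (h x) * ENNReal.ofReal (h y / h x)) * N.bv h M n y) := by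
            unfold hp; ring
        _ ≤ N.p x y * (ENNReal.ofReal M * N.sv n y) := by
            rw [e]; exact mul_le_mul_right (ih y hy) _
        _ = _ := by ring

def IsHit (l : List V) : Prop := l.getLast? = some N.o ∧ N.o ∉ l.dropLast

theorem isHit_cons (y : V) (l : List V) (hl : N.IsHit (y :: l)) :
    (y = N.o ∧ l = []) ∨ (y ≠ N.o ∧ N.IsHit l) := by
  unfold IsHit at *
  cases l with
  | nil => left; simpa using hl
  | cons z l =>
    right
    obtain ⟨h1, h2⟩ := hl
    rw [List.dropLast_cons_cons, List.mem_cons, not_or] at h2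
    exact ⟨fun e => h2.1 e.symm, by simpa using h1, h2.2⟩

def Tv (n : ℕ) (x : V) : ℝ≥0∞ :=
  ∑' l : List V, if N.IsHit l ∧ l.length ≤ n then N.pathProb x l else 0

theorem Tv_mono (x : V) : Monotone (fun n => N.Tv n x) := by
  intro m n hmn
  refine ENNReal.tsum_le_tsum fun l => ?_
  by_cases h1 : N.IsHit l ∧ l.length ≤ m
  · rw [if_pos h1, if_pos ⟨h1.1, h1.2.trans hmn⟩]
  · rw [if_neg h1]; exact zero_le

theorem Tv_le (n : ℕ) (x : V) (hx : x ≠ N.o) : N.Tv n x ≤ N.tv n x := by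
  have hnil : ¬ N.IsHit [] := by simp [IsHit]
  induction n generalizing x with
  | zero =>
    have : N.Tv 0 x = 0 := by
      unfold Tv
      rw [ENNReal.tsum_eq_zero]
      intro l
      rw [if_neg]
      rintro ⟨h1, h2⟩
      have : l = [] := by simpa using h2
      exact hnil (this ▸ h1)
    rw [this]; exact zero_le
  | succ n ih =>
    unfold Tv tv
    rw [if_neg hx, tsum_list, if_neg (fun e => hnil e.1), zero_add]
    refine ENNReal.tsum_le_tsum fun y => ?_
    by_cases hy : y = N.o
    · rw [tsum_eq_single []]
      · have : N.tv n y = 1 := by cases n <;> simp [tv, hy]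
        rw [this]
        split_ifs
        · simp [pathProb]
        · exact zero_le
      · intro l hl
        rw [if_neg]
        rintro ⟨h1, -⟩
        rcases N.isHit_cons y l h1 with h2 | h2
        · exact hl h2.2
        · exact h2.1 hy
    · refine le_trans ?_ (mul_le_mul_right (ih y hy) (N.p x y))
      unfold Tv
      rw [← ENNReal.tsum_mul_left]
      refine ENNReal.tsum_le_tsum fun l => ?_
      split_ifs with h1 h2 h2
      · exact le_rfl
      · exfalso
        apply h2
        rcases N.isHit_cons y l h1.1 with h3 | h3
        · exact absurd h3.1 hy
        · exact ⟨h3.2, by simpa using h1.2⟩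
      · exact zero_le
      · exact zero_le

theorem one_le_iSup_Tv (hrec : N.Recurrent) (x : V) (hx : x ≠ N.o) :
    1 ≤ ⨆ n, N.Tv n x := by
  have h1 := hrec x
  unfold hitProb at h1
  rw [if_neg hx] at h1
  rw [← h1, ENNReal.tsum_eq_iSup_sum]
  refine iSup_le fun s => ?_
  refine le_trans ?_ (le_iSup _ (s.sup fun l => l.1.length))
  unfold Tv
  have e : ∑ l ∈ s, N.pathProb x l.1 = ∑ l ∈ s.map (Function.Embedding.subtype _),
      if N.IsHit l ∧ l.length ≤ (s.sup fun l => l.1.length) then N.pathProb x l else 0 := by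
    rw [Finset.sum_map]
    refine Finset.sum_congr rfl fun l hl => ?_
    rw [if_pos]
    · rfl
    · exact ⟨l.2, Finset.le_sup (f := fun l : {l : List V // l.getLast? = some N.o ∧
        N.o ∉ l.dropLast} => l.1.length) hl⟩
  rw [e]
  exact ENNReal.sum_le_tsum _

theorem sv_tendsto (hrec : N.Recurrent) (x : V) (hx : x ≠ N.o) :
    Tendsto (fun n => N.sv n x) atTop (𝓝 0) := by
  have hle : ∀ n, N.Tv n x ≤ 1 := fun n =>
    (N.Tv_le n x hx).trans (by rw [← N.sv_add_tv n x]; exact le_add_self)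
  have h1 : ⨆ n, N.Tv n x = 1 := le_antisymm (iSup_le hle) (N.one_le_iSup_Tv hrec x hx)
  have h2 := tendsto_atTop_iSup (N.Tv_mono x)
  rw [h1] at h2
  have h3 := ENNReal.Tendsto.sub (tendsto_const_nhds (x := (1 : ℝ≥0∞)) (f := atTop)) h2
    (Or.inl ENNReal.one_ne_top)
  rw [tsub_self] at h3
  refine tendsto_of_tendsto_of_tendsto_of_le_of_le tendsto_const_nhds h3
    (fun n => zero_le) fun n => ?_
  have hT := hle n
  refine ENNReal.le_sub_of_add_le_right (ne_top_of_le_ne_top ENNReal.one_ne_top hT) ?_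
  rw [← N.sv_add_tv n x]
  gcongr
  exact N.Tv_le n x hx

theorem hLevelProb_eq_av (h : V → ℝ) (M : ℝ) (n : ℕ) (x : V) :
    N.hLevelProb h x n M = N.av h M n x := by
  have key : ∀ n x, N.hLevelProb h x n M = ∑' l : List V,
      if l.length = n ∧ M < h ((x :: l).getLast (List.cons_ne_nil x l))
        then N.hPathProb h x l else 0 := by
    intro n x
    unfold hLevelProb
    refine (tsum_subtype {l : List V | l.length = n ∧
      M < h ((x :: l).getLast (List.cons_ne_nil x l))} (N.hPathProb h x)).trans ?_
    refine tsum_congr fun l => ?_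
    rw [Set.indicator_apply]
    rfl
  induction n generalizing x with
  | zero =>
    rw [key, tsum_list]
    simp [av, hPathProb]
  | succ n ih =>
    rw [key, tsum_list]
    unfold av
    simp only [← ih, key, ← ENNReal.tsum_mul_left]
    simp [hPathProb]

end RootedNetwork
/-- For a potential `h` on a recurrent rooted network and the `h`-process
`{Y_n}` started at `v ∈ S_h`, one has `P^h_v(h(Y_ℓ) > M) → 1` as `ℓ → ∞`, for
every `M > 0`. -/
theorem hLevelProb_tendsto_one {V : Type*} (N : RootedNetwork V)
    (hrec : N.Recurrent) (h : V → ℝ) (hpot : N.IsPotential h)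
    (v : V) (hv : 0 < h v) (M : ℝ) (hM : 0 < M) :
    Tendsto (fun ℓ : ℕ => N.hLevelProb h v ℓ M) atTop (𝓝 (1 : ℝ≥0∞)) := by
  have hvo : v ≠ N.o := by rintro rfl; simp [hpot.2.1] at hv
  have hb : Tendsto (fun n => N.bv h M n v) atTop (𝓝 0) := by
    have h1 := ENNReal.Tendsto.const_mul (a := (ENNReal.ofReal (h v))⁻¹ * ENNReal.ofReal M)
      (N.sv_tendsto hrec v hvo) (Or.inr (by finiteness [(ENNReal.ofReal_pos.2 hv).ne']))
    rw [mul_zero] at h1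
    refine tendsto_of_tendsto_of_tendsto_of_le_of_le tendsto_const_nhds h1
      (fun n => zero_le) fun n => ?_
    have hne : ENNReal.ofReal (h v) ≠ 0 := (ENNReal.ofReal_pos.2 hv).ne'
    have h2 := N.bv_le h hpot M n v hv
    calc N.bv h M n v
        = (ENNReal.ofReal (h v))⁻¹ * (ENNReal.ofReal (h v) * N.bv h M n v) := by
          rw [← mul_assoc, ENNReal.inv_mul_cancel hne ENNReal.ofReal_ne_top, one_mul]
      _ ≤ (ENNReal.ofReal (h v))⁻¹ * (ENNReal.ofReal M * N.sv n v) := by gcongr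
      _ = _ := by rw [mul_assoc]
  have h3 := ENNReal.Tendsto.sub (tendsto_const_nhds (x := (1 : ℝ≥0∞)) (f := atTop)) hb
    (Or.inl ENNReal.one_ne_top)
  rw [tsub_zero] at h3
  refine h3.congr fun n => ?_
  have h4 := N.av_add_bv h hpot M n v hv
  rw [N.hLevelProb_eq_av, ← h4]
  refine ENNReal.add_sub_cancel_right (ne_top_of_le_ne_top ENNReal.one_ne_top ?_)
  rw [← h4]; exact le_add_self
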